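/- arXiv:2105.12966 — 2 statements merged into one kernel-verified Lean document; each statement's English description precedes it below -/
import Mathlib

section
/- (Lemma 2.2, multivariate moment matching.) Let σ_{1,1},…,σ_{1,k} and σ_{2,1},…,σ_{2,k} : ℂ, assume Q is symmetric, and assume that for each i the matrices G(σ_{1,i}), G(σ_{2,i}), G(σ_{1,i}+σ_{2,i}), Wᵀ * G(σ_{1,i}) * V, Wᵀ * G(σ_{2,i}) * V and Wᵀ * G(σ_{1,i}+σ_{2,i}) * V are invertible. Suppose the column span of V contains x1(σ_{1,i}), x1(σ_{2,i}) and x2(σ_{1,i}, σ_{2,i}) for all i, and the column span of W contains y1(σ_{1,i}+σ_{2,i}), y2(σ_{1,i}, σ_{2,i}) and y2(σ_{2,i}, σ_{1,i}) for all i. Then for each i: H1(σ_{1,i}) = Ĥ1(σ_{1,i}), H1(σ_{2,i}) = Ĥ1(σ_{2,i}), H1(σ_{1,i}+σ_{2,i}) = Ĥ1(σ_{1,i}+σ_{2,i}), H2(σ_{1,i}, σ_{2,i}) = Ĥ2(σ_{1,i}, σ_{2,i}), deriv (fun s => H2(s, σ_{2,i})) σ_{1,i} = deriv (fun s => Ĥ2(s,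 σ_{2,i})) σ_{1,i}, and deriv (fun s => H2(σ_{2,i}, s)) σ_{1,i} = deriv (fun s => Ĥ2(σ_{2,i}, s)) σ_{1,i}. -/
open Matrix
open scoped Kronecker

noncomputable section

/-- Kronecker product of vectors: `(u ⊗ v) (l, j) = u l * v j`. -/
def vkron {n : ℕ} (u v : Fin n → ℂ) : Fin n × Fin n → ℂ :=
  fun p => u p.1 * v p.2

/-- The matrix pencil `G(s) = s • E - A`. -/
def Gm {n : ℕ} (E A : Matrix (Fin n) (Fin n) ℂ) (s : ℂ) : Matrix (Fin n) (Fin n) ℂ :=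
  s • E - A

/-- Primal state of the first subsystem: `x1(s) = G(s)⁻¹ *ᵥ B`. -/
def x1 {n : ℕ} (E A : Matrix (Fin n) (Fin n) ℂ) (B : Fin n → ℂ) (s : ℂ) : Fin n → ℂ :=
  (Gm E A s)⁻¹ *ᵥ B

/-- First-order transfer function `H1(s) = C ⬝ᵥ x1(s)`. -/
def H1 {n : ℕ} (E A : Matrix (Fin n) (Fin n) ℂ) (B C : Fin n → ℂ) (s : ℂ) : ℂ :=
  C ⬝ᵥ x1 E A B s

/-- Second-order input term `B₂(s1, s2)`. -/
def B2 {n : ℕ} (E A N : Matrix (Fin n) (Fin n) ℂ) (Q : Matrix (Fin n) (Fin n × Fin n) ℂ)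
    (B : Fin n → ℂ) (s1 s2 : ℂ) : Fin n → ℂ :=
  Q *ᵥ vkron (x1 E A B s1) (x1 E A B s2) + (1/2 : ℂ) • (N *ᵥ (x1 E A B s1 + x1 E A B s2))

/-- Primal state of the second subsystem: `x2(s1, s2) = G(s1+s2)⁻¹ *ᵥ B₂(s1, s2)`. -/
def x2 {n : ℕ} (E A N : Matrix (Fin n) (Fin n) ℂ) (Q : Matrix (Fin n) (Fin n × Fin n) ℂ)
    (B : Fin n → ℂ) (s1 s2 : ℂ) : Fin n → ℂ :=
  (Gm E A (s1 + s2))⁻¹ *ᵥ B2 E A N Q B s1 s2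

/-- Second-order (symmetric) transfer function `H2(s1, s2) = C ⬝ᵥ x2(s1, s2)`. -/
def H2 {n : ℕ} (E A N : Matrix (Fin n) (Fin n) ℂ) (Q : Matrix (Fin n) (Fin n × Fin n) ℂ)
    (B C : Fin n → ℂ) (s1 s2 : ℂ) : ℂ :=
  C ⬝ᵥ x2 E A N Q B s1 s2

/-- Dual state of the first subsystem: `y1(s) = (G(s)ᵀ)⁻¹ *ᵥ C`. -/
def y1 {n : ℕ} (E A : Matrix (Fin n) (Fin n) ℂ) (C : Fin n → ℂ) (s : ℂ) : Fin n → ℂ :=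
  ((Gm E A s)ᵀ)⁻¹ *ᵥ C

/-- Mode-2 matricization: `Q⁽²⁾ j (l, i) = Q i (l, j)`. -/
def mode2 {n : ℕ} (Q : Matrix (Fin n) (Fin n × Fin n) ℂ) : Matrix (Fin n) (Fin n × Fin n) ℂ :=
  fun j p => Q p.2 (p.1, j)

/-- Dual output term `C₂(s1, s2)`. -/
def C2 {n : ℕ} (E A N : Matrix (Fin n) (Fin n) ℂ) (Q : Matrix (Fin n) (Fin n × Fin n) ℂ)
    (B C : Fin n → ℂ) (s1 s2 : ℂ) : Fin n → ℂ :=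
  mode2 Q *ᵥ vkron (x1 E A B s2) (y1 E A C (s1 + s2)) +
    (1/2 : ℂ) • (Nᵀ *ᵥ y1 E A C (s1 + s2))

/-- Dual state of the second subsystem: `y2(s1, s2) = (G(s1)ᵀ)⁻¹ *ᵥ C₂(s1, s2)`. -/
def y2 {n : ℕ} (E A N : Matrix (Fin n) (Fin n) ℂ) (Q : Matrix (Fin n) (Fin n × Fin n) ℂ)
    (B C : Fin n → ℂ) (s1 s2 : ℂ) : Fin n → ℂ :=
  ((Gm E A s1)ᵀ)⁻¹ *ᵥ C2 E A N Q B C s1 s2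

/-- `Q` is symmetric: `Q *ᵥ (u ⊗ v) = Q *ᵥ (v ⊗ u)` for all `u, v`. -/
def QSymm {n : ℕ} (Q : Matrix (Fin n) (Fin n × Fin n) ℂ) : Prop :=
  ∀ u v : Fin n → ℂ, Q *ᵥ vkron u v = Q *ᵥ vkron v u

/-- Euclidean (ℓ²) norm of a vector in `Fin n → ℂ`. -/
def vnorm {n : ℕ} (v : Fin n → ℂ) : ℝ := ‖(WithLp.equiv 2 (Fin n → ℂ)).symm v‖

/-- ℓ²-induced operator norm of a square complex matrix. -/
def mnorm {n : ℕ} (M : Matrix (Fin n) (Fin n) ℂ) : ℝ := ‖Matrix.toEuclideanCLM (𝕜 := ℂ) M‖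

/-!
A Petrov–Galerkin reduction is exact for a linear system `M x = b` whenever its solution lies in the
column span of `V`, and for the dual system `Mᵀ y = c` whenever its solution lies in the column span
of `W`. Hence `V` lifts the reduced `x1`, `x2` to the full ones, and `W` lifts the reduced `y1`,
`y2`. When `Q` is symmetric, differentiating the resolvents and moving them to the dual side gives
`∂₁H2(s, t) = -y1(s + t) ⬝ᵥ E x2(s, t) - y2(s, t) ⬝ᵥ E x1(s)`,
which involves only lifted quantities and therefore takes the same value on the reduced system.
-/

section MatrixAlgebra

variable {R : Type*} {l m n r : Type*} [Fintype m] [Fintype n]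

section CommSemiring

variable [CommSemiring R]

theorem transpose_mulVec_dotProduct (M : Matrix m n R) (u : m → R) (v : n → R) :
    (Mᵀ *ᵥ u) ⬝ᵥ v = u ⬝ᵥ (M *ᵥ v) := by
  rw [mulVec_transpose, dotProduct_mulVec]

theorem transpose_petrovGalerkin (W : Matrix m l R) (M : Matrix m n R) (V : Matrix n r R) :
    (Wᵀ * M * V)ᵀ = Vᵀ * Mᵀ * W := by
  rw [transpose_mul, transpose_mul, transpose_transpose, Matrix.mul_assoc]

theorem dotProduct_petrovGalerkin_mulVec [Fintype l] [Fintype r] (W : Matrix m l R)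
    (M : Matrix m n R) (V : Matrix n r R) (u : l → R) (v : r → R) :
    u ⬝ᵥ ((Wᵀ * M * V) *ᵥ v) = (W *ᵥ u) ⬝ᵥ (M *ᵥ (V *ᵥ v)) := by
  rw [← mulVec_mulVec, ← mulVec_mulVec, ← transpose_mulVec_dotProduct, transpose_transpose]

end CommSemiring

variable [CommRing R] [DecidableEq n]

theorem dotProduct_nonsing_inv_mulVec (M : Matrix n n R) (u v : n → R) :
    u ⬝ᵥ (M⁻¹ *ᵥ v) = (Mᵀ⁻¹ *ᵥ u) ⬝ᵥ v := by
  rw [dotProduct_mulVec, ← mulVec_transpose, transpose_nonsing_inv]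

variable [Fintype r] [DecidableEq r] {M : Matrix n n R} {V W : Matrix n r R} {b : n → R}

theorem mulVec_petrovGalerkin_inv_mulVec (hM : IsUnit M) (hWMV : IsUnit (Wᵀ * M * V))
    (hV : ∃ c, M⁻¹ *ᵥ b = V *ᵥ c) :
    V *ᵥ ((Wᵀ * M * V)⁻¹ *ᵥ (Wᵀ *ᵥ b)) = M⁻¹ *ᵥ b := by
  obtain ⟨c, hc⟩ := hV
  have hb : M *ᵥ (V *ᵥ c) = b := by
    rw [← hc, mulVec_mulVec, mul_nonsing_inv _ (M.isUnit_iff_isUnit_det.1 hM), one_mulVec]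
  have hsolve : (Wᵀ * M * V)⁻¹ *ᵥ (Wᵀ *ᵥ b) = c := by
    rw [← hb, mulVec_mulVec _ Wᵀ, mulVec_mulVec _ (Wᵀ * M), mulVec_mulVec,
      nonsing_inv_mul _ ((isUnit_iff_isUnit_det _).1 hWMV), one_mulVec]
  rw [hsolve, hc]

theorem mulVec_petrovGalerkin_transpose_inv_mulVec (hM : IsUnit M) (hWMV : IsUnit (Wᵀ * M * V))
    (hW : ∃ d, Mᵀ⁻¹ *ᵥ b = W *ᵥ d) :
    W *ᵥ ((Wᵀ * M * V)ᵀ⁻¹ *ᵥ (Vᵀ *ᵥ b)) = Mᵀ⁻¹ *ᵥ b := by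
  rw [← isUnit_transpose, transpose_petrovGalerkin] at hWMV
  rw [transpose_petrovGalerkin]
  exact mulVec_petrovGalerkin_inv_mulVec (M.isUnit_transpose.2 hM) hWMV hW

end MatrixAlgebra

section MatrixCalculus

open Filter Topology

variable {𝕜 : Type*} [NontriviallyNormedField 𝕜] {m n : Type*} {s : 𝕜}

theorem hasDerivAt_matrix [Finite n] {M : 𝕜 → Matrix m n 𝕜} {M' : Matrix m n 𝕜} :
    HasDerivAt M M' s ↔ ∀ i j, HasDerivAt (fun t => M t i j) (M' i j) s := by
  have := Fintype.ofFinite n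
  exact hasDerivAt_pi.trans (forall_congr' fun _ => hasDerivAt_pi)

theorem hasDerivAt_matrix_iff_tendsto_slope [Finite n] {M : 𝕜 → Matrix m n 𝕜}
    {M' : Matrix m n 𝕜} :
    HasDerivAt M M' s ↔ Tendsto (slope M s) (𝓝[≠] s) (𝓝 M') := by
  refine hasDerivAt_matrix.trans (Iff.trans ?_ tendsto_pi_nhds.symm)
  exact forall_congr' fun i =>
    (forall_congr' fun j => hasDerivAt_iff_tendsto_slope).trans tendsto_pi_nhds.symm

theorem hasDerivAt_const_matrix [Finite n] (M : Matrix m n 𝕜) : HasDerivAt (fun _ => M) 0 s :=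
  hasDerivAt_matrix.2 fun i j => hasDerivAt_const s (M i j)

variable [Fintype n]

theorem hasDerivAt_mulVec {M : 𝕜 → Matrix m n 𝕜} {M' : Matrix m n 𝕜} {v : 𝕜 → n → 𝕜}
    {v' : n → 𝕜} (hM : HasDerivAt M M' s) (hv : HasDerivAt v v' s) :
    HasDerivAt (fun t => M t *ᵥ v t) (M' *ᵥ v s + M s *ᵥ v') s := by
  refine hasDerivAt_pi.2 fun i => ?_
  refine (HasDerivAt.fun_sum fun j _ =>
    (hasDerivAt_matrix.1 hM i j).mul (hasDerivAt_pi.1 hv j)).congr_deriv ?_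
  simp only [mulVec, dotProduct, Pi.add_apply, Finset.sum_add_distrib]

theorem hasDerivAt_const_mulVec (M : Matrix m n 𝕜) {v : 𝕜 → n → 𝕜} {v' : n → 𝕜}
    (hv : HasDerivAt v v' s) : HasDerivAt (fun t => M *ᵥ v t) (M *ᵥ v') s := by
  simpa only [zero_mulVec, zero_add] using hasDerivAt_mulVec (hasDerivAt_const_matrix M) hv

theorem hasDerivAt_const_dotProduct (c : n → 𝕜) {v : 𝕜 → n → 𝕜} {v' : n → 𝕜}
    (hv : HasDerivAt v v' s) : HasDerivAt (fun t => c ⬝ᵥ v t) (c ⬝ᵥ v') s :=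
  HasDerivAt.fun_sum fun i _ => (hasDerivAt_pi.1 hv i).const_mul (c i)

variable [DecidableEq n] {M : 𝕜 → Matrix n n 𝕜} {M' : Matrix n n 𝕜}

theorem hasDerivAt_nonsing_inv (hM : HasDerivAt M M' s) (hMs : IsUnit (M s)) :
    HasDerivAt (fun t => (M t)⁻¹) (-((M s)⁻¹ * M' * (M s)⁻¹)) s := by
  have hdet : (M s).det ≠ 0 := ((M s).isUnit_iff_isUnit_det.1 hMs).ne_zero
  have hcont : ContinuousAt M s :=
    continuousAt_pi.2 fun i => continuousAt_pi.2 fun j => (hasDerivAt_matrix.1 hM i j).continuousAt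
  have hcont_inv : ContinuousAt (fun t => (M t)⁻¹) s :=
    (continuousAt_matrix_inv (M s) (by simpa using continuousAt_inv₀ hdet)).comp hcont
  have hunit : ∀ᶠ t in 𝓝[≠] s, IsUnit (M t) := by
    filter_upwards [nhdsWithin_le_nhds <|
      (continuous_id.matrix_det.continuousAt.comp hcont).eventually_ne hdet] with t ht
    exact (M t).isUnit_iff_isUnit_det.2 ht.isUnit
  rw [hasDerivAt_matrix_iff_tendsto_slope] at hM ⊢
  refine (((hcont_inv.mono_left nhdsWithin_le_nhds).mul hM).mul_const (M s)⁻¹).neg.congr' ?_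
  filter_upwards [hunit] with t ht
  rw [slope_def_module, slope_def_module, Matrix.inv_sub_inv (iff_of_true ht hMs),
    Matrix.mul_smul, Matrix.smul_mul, ← smul_neg, ← Matrix.neg_mul, ← Matrix.mul_neg, neg_sub]

theorem hasDerivAt_nonsing_inv_mulVec {b : 𝕜 → n → 𝕜} {b' : n → 𝕜} (hM : HasDerivAt M M' s)
    (hMs : IsUnit (M s)) (hb : HasDerivAt b b' s) :
    HasDerivAt (fun t => (M t)⁻¹ *ᵥ b t)
      ((M s)⁻¹ *ᵥ (b' - M' *ᵥ ((M s)⁻¹ *ᵥ b s))) s := by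
  refine (hasDerivAt_mulVec (hasDerivAt_nonsing_inv hM hMs) hb).congr_deriv ?_
  rw [mulVec_sub, mulVec_mulVec, mulVec_mulVec, neg_mulVec, neg_add_eq_sub]

end MatrixCalculus

theorem vkron_eq_vec_vecMulVec {n : ℕ} (u v : Fin n → ℂ) : vkron u v = vec (vecMulVec v u) :=
  funext fun _ => mul_comm _ _

theorem kronecker_mulVec_vkron {m n : ℕ} (U V : Matrix (Fin m) (Fin n) ℂ) (u v : Fin n → ℂ) :
    (U ⊗ₖ V) *ᵥ vkron u v = vkron (U *ᵥ u) (V *ᵥ v) := by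
  rw [vkron_eq_vec_vecMulVec, vkron_eq_vec_vecMulVec, kronecker_mulVec_vec, mul_vecMulVec,
    vecMulVec_mul, vecMul_transpose]

theorem dotProduct_mode2_mulVec_vkron {n : ℕ} (Q : Matrix (Fin n) (Fin n × Fin n) ℂ)
    (u w y : Fin n → ℂ) : u ⬝ᵥ (mode2 Q *ᵥ vkron w y) = y ⬝ᵥ (Q *ᵥ vkron w u) := by
  simp only [dotProduct, mulVec, mode2, vkron, Fintype.sum_prod_type, Finset.mul_sum]
  rw [Finset.sum_comm_cycle]
  refine Finset.sum_congr rfl fun i _ => ?_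
  rw [Finset.sum_comm]
  refine Finset.sum_congr rfl fun l _ => Finset.sum_congr rfl fun j _ => ?_
  ring

section TransferFunctions

variable {n : ℕ} {E A N : Matrix (Fin n) (Fin n) ℂ} {Q : Matrix (Fin n) (Fin n × Fin n) ℂ}
  {B C : Fin n → ℂ} {s t : ℂ}

theorem H1_eq_y1_dotProduct : H1 E A B C s = y1 E A C s ⬝ᵥ B :=
  dotProduct_nonsing_inv_mulVec _ _ _

theorem H2_comm (hQ : QSymm Q) (s t : ℂ) : H2 E A N Q B C s t = H2 E A N Q B C t s := by
  rw [H2, H2, x2, x2, B2, B2, hQ, add_comm s t, add_comm (x1 E A B s)]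

theorem dotProduct_C2 (u : Fin n → ℂ) :
    u ⬝ᵥ C2 E A N Q B C s t =
      y1 E A C (s + t) ⬝ᵥ (Q *ᵥ vkron (x1 E A B t) u + (1 / 2 : ℂ) • (N *ᵥ u)) := by
  rw [C2, dotProduct_add, dotProduct_add, dotProduct_mode2_mulVec_vkron, dotProduct_smul,
    dotProduct_smul, dotProduct_transpose_mulVec]

theorem hasDerivAt_Gm : HasDerivAt (Gm E A) E s := by
  refine hasDerivAt_matrix.2 fun i j => ?_
  simpa only [one_mul] using! ((hasDerivAt_id s).mul_const (E i j)).sub_const (A i j)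

theorem hasDerivAt_x1 (hG : IsUnit (Gm E A s)) :
    HasDerivAt (x1 E A B) (-((Gm E A s)⁻¹ *ᵥ (E *ᵥ x1 E A B s))) s := by
  simpa only [zero_sub, mulVec_neg] using!
    hasDerivAt_nonsing_inv_mulVec hasDerivAt_Gm hG (hasDerivAt_const s B)

theorem hasDerivAt_B2_left {x' : Fin n → ℂ} (hx : HasDerivAt (x1 E A B) x' s) :
    HasDerivAt (fun z => B2 E A N Q B z t)
      (Q *ᵥ vkron x' (x1 E A B t) + (1 / 2 : ℂ) • (N *ᵥ x')) s := by
  have hvkron : HasDerivAt (fun z => vkron (x1 E A B z) (x1 E A B t)) (vkron x' (x1 E A B t)) s :=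
    hasDerivAt_pi.2 fun p => (hasDerivAt_pi.1 hx p.1).mul_const _
  exact (hasDerivAt_const_mulVec Q hvkron).add
    ((hasDerivAt_const_mulVec N (hx.add_const _)).fun_const_smul _)

theorem hasDerivAt_x2_left {b' : Fin n → ℂ} (hG : IsUnit (Gm E A (s + t)))
    (hB : HasDerivAt (fun z => B2 E A N Q B z t) b' s) :
    HasDerivAt (fun z => x2 E A N Q B z t)
      ((Gm E A (s + t))⁻¹ *ᵥ (b' - E *ᵥ x2 E A N Q B s t)) s :=
  hasDerivAt_nonsing_inv_mulVec (hasDerivAt_matrix.2 fun i j =>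
    (hasDerivAt_matrix.1 hasDerivAt_Gm i j).comp_add_const s t) hG hB

theorem hasDerivAt_H2_left (hQ : QSymm Q) (hGs : IsUnit (Gm E A s))
    (hGst : IsUnit (Gm E A (s + t))) :
    HasDerivAt (fun z => H2 E A N Q B C z t)
      (-(y1 E A C (s + t) ⬝ᵥ (E *ᵥ x2 E A N Q B s t))
        - y2 E A N Q B C s t ⬝ᵥ (E *ᵥ x1 E A B s)) s := by
  set x' : Fin n → ℂ := -((Gm E A s)⁻¹ *ᵥ (E *ᵥ x1 E A B s)) with hx'
  set b' : Fin n → ℂ := Q *ᵥ vkron x' (x1 E A B t) + (1 / 2 : ℂ) • (N *ᵥ x') with hb'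
  have hx2 : HasDerivAt (fun z => x2 E A N Q B z t)
      ((Gm E A (s + t))⁻¹ *ᵥ (b' - E *ᵥ x2 E A N Q B s t)) s :=
    hasDerivAt_x2_left hGst (hasDerivAt_B2_left (hasDerivAt_x1 hGs))
  have hdual : y1 E A C (s + t) ⬝ᵥ b' = -(y2 E A N Q B C s t ⬝ᵥ (E *ᵥ x1 E A B s)) :=
    calc y1 E A C (s + t) ⬝ᵥ b' = C2 E A N Q B C s t ⬝ᵥ x' := by
          rw [hb', hQ, ← dotProduct_C2, dotProduct_comm]
      _ = -(y2 E A N Q B C s t ⬝ᵥ (E *ᵥ x1 E A B s)) := by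
          rw [hx', dotProduct_neg, dotProduct_nonsing_inv_mulVec, y2]
  refine (hasDerivAt_const_dotProduct C hx2).congr_deriv ?_
  rw [dotProduct_nonsing_inv_mulVec, ← y1, dotProduct_sub, hdual, neg_sub_comm]

end TransferFunctions

section PetrovGalerkinReduction

variable {n r : ℕ} {E A N : Matrix (Fin n) (Fin n) ℂ} {Q : Matrix (Fin n) (Fin n × Fin n) ℂ}
  {B C : Fin n → ℂ} {V W : Matrix (Fin n) (Fin r) ℂ} {s t : ℂ}

theorem Gm_petrovGalerkin : Gm (Wᵀ * E * V) (Wᵀ * A * V) s = Wᵀ * Gm E A s * V := by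
  rw [Gm, Gm, Matrix.mul_sub, Matrix.sub_mul, Matrix.mul_smul, Matrix.smul_mul]

theorem petrovGalerkin_mulVec_vkron (u v : Fin r → ℂ) :
    (Wᵀ * Q * (V ⊗ₖ V)) *ᵥ vkron u v = Wᵀ *ᵥ (Q *ᵥ vkron (V *ᵥ u) (V *ᵥ v)) := by
  rw [← mulVec_mulVec, ← mulVec_mulVec, kronecker_mulVec_vkron]

theorem QSymm.petrovGalerkin (hQ : QSymm Q) : QSymm (Wᵀ * Q * (V ⊗ₖ V)) := fun u v => by
  rw [petrovGalerkin_mulVec_vkron, petrovGalerkin_mulVec_vkron, hQ]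

theorem mulVec_x1_petrovGalerkin (hG : IsUnit (Gm E A s)) (hGr : IsUnit (Wᵀ * Gm E A s * V))
    (hV : ∃ c, x1 E A B s = V *ᵥ c) :
    V *ᵥ x1 (Wᵀ * E * V) (Wᵀ * A * V) (Wᵀ *ᵥ B) s = x1 E A B s := by
  rw [x1, Gm_petrovGalerkin]
  exact mulVec_petrovGalerkin_inv_mulVec hG hGr hV

theorem B2_petrovGalerkin
    (hs : V *ᵥ x1 (Wᵀ * E * V) (Wᵀ * A * V) (Wᵀ *ᵥ B) s = x1 E A B s)
    (ht : V *ᵥ x1 (Wᵀ * E * V) (Wᵀ * A * V) (Wᵀ *ᵥ B) t = x1 E A B t) :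
    B2 (Wᵀ * E * V) (Wᵀ * A * V) (Wᵀ * N * V) (Wᵀ * Q * (V ⊗ₖ V)) (Wᵀ *ᵥ B) s t =
      Wᵀ *ᵥ B2 E A N Q B s t := by
  rw [B2, B2, petrovGalerkin_mulVec_vkron, ← mulVec_mulVec, ← mulVec_mulVec, mulVec_add V, hs, ht,
    mulVec_add Wᵀ, mulVec_smul]

theorem mulVec_x2_petrovGalerkin (hG : IsUnit (Gm E A (s + t)))
    (hGr : IsUnit (Wᵀ * Gm E A (s + t) * V))
    (hs : V *ᵥ x1 (Wᵀ * E * V) (Wᵀ * A * V) (Wᵀ *ᵥ B) s = x1 E A B s)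
    (ht : V *ᵥ x1 (Wᵀ * E * V) (Wᵀ * A * V) (Wᵀ *ᵥ B) t = x1 E A B t)
    (hV : ∃ c, x2 E A N Q B s t = V *ᵥ c) :
    V *ᵥ x2 (Wᵀ * E * V) (Wᵀ * A * V) (Wᵀ * N * V) (Wᵀ * Q * (V ⊗ₖ V)) (Wᵀ *ᵥ B) s t =
      x2 E A N Q B s t := by
  rw [x2, B2_petrovGalerkin hs ht, Gm_petrovGalerkin]
  exact mulVec_petrovGalerkin_inv_mulVec hG hGr hV

theorem mulVec_y1_petrovGalerkin (hG : IsUnit (Gm E A s)) (hGr : IsUnit (Wᵀ * Gm E A s * V))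
    (hW : ∃ d, y1 E A C s = W *ᵥ d) :
    W *ᵥ y1 (Wᵀ * E * V) (Wᵀ * A * V) (Vᵀ *ᵥ C) s = y1 E A C s := by
  rw [y1, Gm_petrovGalerkin]
  exact mulVec_petrovGalerkin_transpose_inv_mulVec hG hGr hW

theorem C2_petrovGalerkin
    (hx : V *ᵥ x1 (Wᵀ * E * V) (Wᵀ * A * V) (Wᵀ *ᵥ B) t = x1 E A B t)
    (hy : W *ᵥ y1 (Wᵀ * E * V) (Wᵀ * A * V) (Vᵀ *ᵥ C) (s + t) = y1 E A C (s + t)) :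
    C2 (Wᵀ * E * V) (Wᵀ * A * V) (Wᵀ * N * V) (Wᵀ * Q * (V ⊗ₖ V)) (Wᵀ *ᵥ B) (Vᵀ *ᵥ C) s t =
      Vᵀ *ᵥ C2 E A N Q B C s t := by
  refine dotProduct_eq _ _ fun u => ?_
  rw [dotProduct_comm, dotProduct_C2, petrovGalerkin_mulVec_vkron, hx, ← mulVec_mulVec,
    ← mulVec_mulVec, ← mulVec_smul, ← mulVec_add, ← transpose_mulVec_dotProduct,
    transpose_transpose, hy, ← dotProduct_C2, transpose_mulVec_dotProduct, dotProduct_comm]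

theorem mulVec_y2_petrovGalerkin (hG : IsUnit (Gm E A s)) (hGr : IsUnit (Wᵀ * Gm E A s * V))
    (hx : V *ᵥ x1 (Wᵀ * E * V) (Wᵀ * A * V) (Wᵀ *ᵥ B) t = x1 E A B t)
    (hy : W *ᵥ y1 (Wᵀ * E * V) (Wᵀ * A * V) (Vᵀ *ᵥ C) (s + t) = y1 E A C (s + t))
    (hW : ∃ d, y2 E A N Q B C s t = W *ᵥ d) :
    W *ᵥ y2 (Wᵀ * E * V) (Wᵀ * A * V) (Wᵀ * N * V) (Wᵀ * Q * (V ⊗ₖ V)) (Wᵀ *ᵥ B) (Vᵀ *ᵥ C) s t =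
      y2 E A N Q B C s t := by
  rw [y2, C2_petrovGalerkin hx hy, Gm_petrovGalerkin]
  exact mulVec_petrovGalerkin_transpose_inv_mulVec hG hGr hW

theorem H1_petrovGalerkin (hx : V *ᵥ x1 (Wᵀ * E * V) (Wᵀ * A * V) (Wᵀ *ᵥ B) s = x1 E A B s) :
    H1 E A B C s = H1 (Wᵀ * E * V) (Wᵀ * A * V) (Wᵀ *ᵥ B) (Vᵀ *ᵥ C) s := by
  rw [H1, H1, transpose_mulVec_dotProduct, hx]

theorem H1_petrovGalerkin_of_dual
    (hy : W *ᵥ y1 (Wᵀ * E * V) (Wᵀ * A * V) (Vᵀ *ᵥ C) s = y1 E A C s) :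
    H1 E A B C s = H1 (Wᵀ * E * V) (Wᵀ * A * V) (Wᵀ *ᵥ B) (Vᵀ *ᵥ C) s := by
  rw [H1_eq_y1_dotProduct, H1_eq_y1_dotProduct, ← transpose_mulVec_dotProduct, transpose_transpose,
    hy]

theorem H2_petrovGalerkin
    (hx : V *ᵥ x2 (Wᵀ * E * V) (Wᵀ * A * V) (Wᵀ * N * V) (Wᵀ * Q * (V ⊗ₖ V)) (Wᵀ *ᵥ B) s t =
      x2 E A N Q B s t) :
    H2 E A N Q B C s t =
      H2 (Wᵀ * E * V) (Wᵀ * A * V) (Wᵀ * N * V) (Wᵀ * Q * (V ⊗ₖ V)) (Wᵀ *ᵥ B) (Vᵀ *ᵥ C) s t := by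
  rw [H2, H2, transpose_mulVec_dotProduct, hx]

theorem deriv_H2_left_petrovGalerkin (hQ : QSymm Q)
    (hGs : IsUnit (Gm E A s)) (hGst : IsUnit (Gm E A (s + t)))
    (hGrs : IsUnit (Wᵀ * Gm E A s * V)) (hGrst : IsUnit (Wᵀ * Gm E A (s + t) * V))
    (hx1 : V *ᵥ x1 (Wᵀ * E * V) (Wᵀ * A * V) (Wᵀ *ᵥ B) s = x1 E A B s)
    (hx2 : V *ᵥ x2 (Wᵀ * E * V) (Wᵀ * A * V) (Wᵀ * N * V) (Wᵀ * Q * (V ⊗ₖ V)) (Wᵀ *ᵥ B) s t =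
      x2 E A N Q B s t)
    (hy1 : W *ᵥ y1 (Wᵀ * E * V) (Wᵀ * A * V) (Vᵀ *ᵥ C) (s + t) = y1 E A C (s + t))
    (hy2 : W *ᵥ y2 (Wᵀ * E * V) (Wᵀ * A * V) (Wᵀ * N * V) (Wᵀ * Q * (V ⊗ₖ V)) (Wᵀ *ᵥ B)
      (Vᵀ *ᵥ C) s t = y2 E A N Q B C s t) :
    deriv (fun z => H2 E A N Q B C z t) s =
      deriv (fun z => H2 (Wᵀ * E * V) (Wᵀ * A * V) (Wᵀ * N * V) (Wᵀ * Q * (V ⊗ₖ V))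
        (Wᵀ *ᵥ B) (Vᵀ *ᵥ C) z t) s := by
  rw [← Gm_petrovGalerkin] at hGrs hGrst
  rw [(hasDerivAt_H2_left hQ hGs hGst).deriv,
    (hasDerivAt_H2_left hQ.petrovGalerkin hGrs hGrst).deriv, dotProduct_petrovGalerkin_mulVec,
    dotProduct_petrovGalerkin_mulVec, hx1, hx2, hy1, hy2]

end PetrovGalerkinReduction

theorem multivariate_moment_matching_general {n r : ℕ}
    {E A N : Matrix (Fin n) (Fin n) ℂ} {Q : Matrix (Fin n) (Fin n × Fin n) ℂ}
    {B C : Fin n → ℂ} {V W : Matrix (Fin n) (Fin r) ℂ} {s t : ℂ} (hQ : QSymm Q)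
    (hGs : IsUnit (Gm E A s)) (hGt : IsUnit (Gm E A t)) (hGst : IsUnit (Gm E A (s + t)))
    (hGrs : IsUnit (Wᵀ * Gm E A s * V)) (hGrt : IsUnit (Wᵀ * Gm E A t * V))
    (hGrst : IsUnit (Wᵀ * Gm E A (s + t) * V))
    (hVs : ∃ c, x1 E A B s = V *ᵥ c) (hVt : ∃ c, x1 E A B t = V *ᵥ c)
    (hVst : ∃ c, x2 E A N Q B s t = V *ᵥ c)
    (hWy1 : ∃ d, y1 E A C (s + t) = W *ᵥ d) (hWy2 : ∃ d, y2 E A N Q B C s t = W *ᵥ d) :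
    H1 E A B C s = H1 (Wᵀ * E * V) (Wᵀ * A * V) (Wᵀ *ᵥ B) (Vᵀ *ᵥ C) s ∧
      H1 E A B C t = H1 (Wᵀ * E * V) (Wᵀ * A * V) (Wᵀ *ᵥ B) (Vᵀ *ᵥ C) t ∧
      H1 E A B C (s + t) = H1 (Wᵀ * E * V) (Wᵀ * A * V) (Wᵀ *ᵥ B) (Vᵀ *ᵥ C) (s + t) ∧
      H2 E A N Q B C s t =
        H2 (Wᵀ * E * V) (Wᵀ * A * V) (Wᵀ * N * V) (Wᵀ * Q * (V ⊗ₖ V))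
          (Wᵀ *ᵥ B) (Vᵀ *ᵥ C) s t ∧
      deriv (fun z => H2 E A N Q B C z t) s =
        deriv (fun z => H2 (Wᵀ * E * V) (Wᵀ * A * V) (Wᵀ * N * V) (Wᵀ * Q * (V ⊗ₖ V))
          (Wᵀ *ᵥ B) (Vᵀ *ᵥ C) z t) s ∧
      deriv (fun z => H2 E A N Q B C t z) s =
        deriv (fun z => H2 (Wᵀ * E * V) (Wᵀ * A * V) (Wᵀ * N * V) (Wᵀ * Q * (V ⊗ₖ V))
          (Wᵀ *ᵥ B) (Vᵀ *ᵥ C) t z) s := by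
  have hx1s := mulVec_x1_petrovGalerkin hGs hGrs hVs
  have hx1t := mulVec_x1_petrovGalerkin hGt hGrt hVt
  have hx2 := mulVec_x2_petrovGalerkin hGst hGrst hx1s hx1t hVst
  have hy1 := mulVec_y1_petrovGalerkin hGst hGrst hWy1
  have hy2 := mulVec_y2_petrovGalerkin hGs hGrs hx1t hy1 hWy2
  have hderiv := deriv_H2_left_petrovGalerkin hQ hGs hGst hGrs hGrst hx1s hx2 hy1 hy2
  refine ⟨H1_petrovGalerkin hx1s, H1_petrovGalerkin hx1t, H1_petrovGalerkin_of_dual hy1,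
    H2_petrovGalerkin hx2, hderiv, ?_⟩
  simpa only [H2_comm hQ t, H2_comm hQ.petrovGalerkin t] using hderiv

theorem multivariate_moment_matching {n r k : ℕ}
    (E A N : Matrix (Fin n) (Fin n) ℂ) (Q : Matrix (Fin n) (Fin n × Fin n) ℂ)
    (B C : Fin n → ℂ) (V W : Matrix (Fin n) (Fin r) ℂ) (σ1 σ2 : Fin k → ℂ)
    (hQ : QSymm Q)
    (hG1 : ∀ i, IsUnit (Gm E A (σ1 i))) (hG2 : ∀ i, IsUnit (Gm E A (σ2 i)))
    (hG12 : ∀ i, IsUnit (Gm E A (σ1 i + σ2 i)))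
    (hGr1 : ∀ i, IsUnit (Wᵀ * Gm E A (σ1 i) * V))
    (hGr2 : ∀ i, IsUnit (Wᵀ * Gm E A (σ2 i) * V))
    (hGr12 : ∀ i, IsUnit (Wᵀ * Gm E A (σ1 i + σ2 i) * V))
    (hVx11 : ∀ i, ∃ c : Fin r → ℂ, x1 E A B (σ1 i) = V *ᵥ c)
    (hVx12 : ∀ i, ∃ c : Fin r → ℂ, x1 E A B (σ2 i) = V *ᵥ c)
    (hVx2 : ∀ i, ∃ c : Fin r → ℂ, x2 E A N Q B (σ1 i) (σ2 i) = V *ᵥ c)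
    (hWy1 : ∀ i, ∃ d : Fin r → ℂ, y1 E A C (σ1 i + σ2 i) = W *ᵥ d)
    (hWy21 : ∀ i, ∃ d : Fin r → ℂ, y2 E A N Q B C (σ1 i) (σ2 i) = W *ᵥ d)
    (hWy22 : ∀ i, ∃ d : Fin r → ℂ, y2 E A N Q B C (σ2 i) (σ1 i) = W *ᵥ d) :
    ∀ i,
      H1 E A B C (σ1 i) =
        H1 (Wᵀ * E * V) (Wᵀ * A * V) (Wᵀ *ᵥ B) (Vᵀ *ᵥ C) (σ1 i) ∧
      H1 E A B C (σ2 i) =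
        H1 (Wᵀ * E * V) (Wᵀ * A * V) (Wᵀ *ᵥ B) (Vᵀ *ᵥ C) (σ2 i) ∧
      H1 E A B C (σ1 i + σ2 i) =
        H1 (Wᵀ * E * V) (Wᵀ * A * V) (Wᵀ *ᵥ B) (Vᵀ *ᵥ C) (σ1 i + σ2 i) ∧
      H2 E A N Q B C (σ1 i) (σ2 i) =
        H2 (Wᵀ * E * V) (Wᵀ * A * V) (Wᵀ * N * V) (Wᵀ * Q * (V ⊗ₖ V))
          (Wᵀ *ᵥ B) (Vᵀ *ᵥ C) (σ1 i) (σ2 i) ∧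
      deriv (fun s => H2 E A N Q B C s (σ2 i)) (σ1 i) =
        deriv (fun s => H2 (Wᵀ * E * V) (Wᵀ * A * V) (Wᵀ * N * V) (Wᵀ * Q * (V ⊗ₖ V))
          (Wᵀ *ᵥ B) (Vᵀ *ᵥ C) s (σ2 i)) (σ1 i) ∧
      deriv (fun s => H2 E A N Q B C (σ2 i) s) (σ1 i) =
        deriv (fun s => H2 (Wᵀ * E * V) (Wᵀ * A * V) (Wᵀ * N * V) (Wᵀ * Q * (V ⊗ₖ V))
          (Wᵀ *ᵥ B) (Vᵀ *ᵥ C) (σ2 i) s) (σ1 i) := by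
  exact fun i => multivariate_moment_matching_general hQ (hG1 i) (hG2 i) (hG12 i) (hGr1 i) (hGr2 i)
    (hGr12 i) (hVx11 i) (hVx12 i) (hVx2 i) (hWy1 i) (hWy21 i)
end
end

section
/- (Output error via the dual state.) Let σ : ℂ with G(σ) invertible, let x̃ : Fin n → ℂ be any approximate state, and set the primal residual r_pr = B - G(σ) *ᵥ x̃. Let x_du : Fin n → ℂ be the exact dual state, i.e., G(σ)ᵀ *ᵥ x_du = -C. Then the output error equals H1(σ) - C ⬝ᵥ x̃ = -(x_du ⬝ᵥ r_pr). -/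
open Matrix
open scoped Kronecker

noncomputable section

theorem output_error_via_dual_state_general {R m ι : Type*} [NonUnitalCommRing R]
    [Fintype m] [Fintype ι] {G : Matrix m ι R} {b : m → R} {c x : ι → R} {y : m → R}
    (hx : G *ᵥ x = b) (hy : Gᵀ *ᵥ y = -c) (x' : ι → R) :
    c ⬝ᵥ x - c ⬝ᵥ x' = -(y ⬝ᵥ (b - G *ᵥ x')) :=
  calc
    c ⬝ᵥ x - c ⬝ᵥ x' = -((x - x') ⬝ᵥ (Gᵀ *ᵥ y)) := by
      rw [hy, dotProduct_neg, neg_neg, dotProduct_comm _ c, dotProduct_sub]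
    _ = -(y ⬝ᵥ (G *ᵥ (x - x'))) := by rw [dotProduct_transpose_mulVec]
    _ = -(y ⬝ᵥ (b - G *ᵥ x')) := by rw [mulVec_sub, hx]

theorem Gm_mulVec_x1 {n : ℕ} {E A : Matrix (Fin n) (Fin n) ℂ} {s : ℂ}
    (hG : IsUnit (Gm E A s)) (B : Fin n → ℂ) : Gm E A s *ᵥ x1 E A B s = B := by
  rw [x1, mulVec_mulVec, mul_nonsing_inv _ ((isUnit_iff_isUnit_det _).mp hG), one_mulVec]

theorem output_error_via_dual_state {n : ℕ}
    (E A : Matrix (Fin n) (Fin n) ℂ) (B C : Fin n → ℂ) (σ : ℂ)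
    (hG : IsUnit (Gm E A σ))
    (xtilde : Fin n → ℂ) (xdu : Fin n → ℂ)
    (hdu : (Gm E A σ)ᵀ *ᵥ xdu = -C) :
    H1 E A B C σ - C ⬝ᵥ xtilde = -(xdu ⬝ᵥ (B - Gm E A σ *ᵥ xtilde)) :=
  output_error_via_dual_state_general (Gm_mulVec_x1 hG B) hdu xtilde
end
end
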